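/- For every M > 0 there exists a single-buyer pricing instance with signals whose conditional value distribution given each signal is regular, together with an ex post individually rational, Bayesian incentive compatible mechanism (which makes negative payments, i.e. sometimes pays the buyer), whose expected revenue is at least M times the optimal revenue under public signals DRev of that instance. -/

import Mathlib

open MeasureTheory Set

/-- A single-buyer pricing instance with signals: a measurable space `S` of signals with a
σ-finite measure `μ`, and a measurable joint density `f` on values `t ∈ ℝ_{≥0}` and
signals `s ∈ S` with total integral `1`. -/
structure SignalInstance where
  /-- the signal space -/
  (S : Type)
  [mS : MeasurableSpace S]
  /-- a σ-finite measure on the signal space -/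
  (μ : MeasureTheory.Measure S)
  (sigmaFinite : MeasureTheory.SigmaFinite μ)
  /-- the joint density of (value, signal) -/
  (f : ℝ → S → ℝ)
  (f_meas : Measurable fun q : ℝ × S => f q.1 q.2)
  (f_nonneg : ∀ t s, 0 ≤ f t s)
  (f_zero : ∀ t s, t < 0 → f t s = 0)
  (f_prob : ∫ s, (∫ t in Set.Ici (0:ℝ), f t s) ∂μ = 1)

attribute [instance] SignalInstance.mS

/-- The expected revenue of a mechanism with payment rule `p` on instance `I`. -/
noncomputable def SignalInstance.Rev (I : SignalInstance) (p : ℝ → I.S → ℝ) : ℝ :=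
  ∫ s, (∫ t in Set.Ici (0:ℝ), I.f t s * p t s) ∂I.μ

/-- The optimal revenue under public signals (naïve pricing revenue):
`DRev = ∫_S sup_{r≥0} r·(∫_{t≥r} f(t,s) dt) dμ(s)`. -/
noncomputable def SignalInstance.DRev (I : SignalInstance) : ℝ :=
  ∫ s, sSup {y : ℝ | ∃ r : ℝ, 0 ≤ r ∧ y = r * ∫ t in Set.Ici r, I.f t s} ∂I.μ

/-- The truncated equal-revenue density `t⁻²` on `[1, u]`, of total mass `1 - u⁻¹`. -/
noncomputable def equalRevenue (u t : ℝ) : ℝ := if 1 ≤ t ∧ t ≤ u then (t ^ 2)⁻¹ else 0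

/-- The dyadic level of a value: `[1, 2]` has level `0`, `(2 ^ j, 2 ^ (j + 1)]` has level `j`. -/
noncomputable def dyadicLevel (t : ℝ) : ℕ := Nat.clog 2 ⌈t⌉₊ - 1

/-- The largest value compatible with signal `k`. -/
noncomputable def signalCap (c k : ℕ) : ℝ := 2 ^ min (k + 1) c

/-- A value of level `j` buys the item exactly at the `c` signals `j, …, j + c - 1`. -/
noncomputable def levelAlloc (c : ℕ) (t : ℝ) (k : ℕ) : ℝ :=
  if (1 ≤ t ∧ t ≤ 2 ^ c) ∧ dyadicLevel t ≤ k ∧ k < dyadicLevel t + c then 1 else 0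

/-- A value of level `j` is paid `(c - K) * 2 ^ j` at signal `j`, which no value of higher level
can observe. -/
noncomputable def levelBonus (c K : ℕ) (t : ℝ) (k : ℕ) : ℝ :=
  if (1 ≤ t ∧ t ≤ 2 ^ c) ∧ k = dyadicLevel t then ((c : ℝ) - K) * 2 ^ dyadicLevel t else 0

/-- The price `2 ^ j` of the item for a value of level `j`, net of the bonus. -/
noncomputable def levelPayment (c K : ℕ) (t : ℝ) (k : ℕ) : ℝ :=
  levelAlloc c t k * 2 ^ dyadicLevel t - levelBonus c K t k

lemma equalRevenue_nonneg (u t : ℝ) : 0 ≤ equalRevenue u t := by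
  unfold equalRevenue; split_ifs <;> positivity

lemma measurable_equalRevenue (u : ℝ) : Measurable (equalRevenue u) :=
  Measurable.ite measurableSet_Icc (by fun_prop) measurable_const

lemma equalRevenue_le_one (u t : ℝ) : equalRevenue u t ≤ 1 := by
  unfold equalRevenue
  split_ifs with h
  · exact inv_le_one_of_one_le₀ (one_le_pow₀ h.1)
  · exact zero_le_one

lemma equalRevenue_eq_indicator (u : ℝ) :
    equalRevenue u = (Icc 1 u).indicator fun t => (t ^ 2)⁻¹ := by
  ext t; simp [equalRevenue, indicator_apply]

lemma integrable_equalRevenue_mul (u : ℝ) {g : ℝ → ℝ} (hg : Measurable g) {C : ℝ}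
    (hC : ∀ t ∈ Icc 1 u, |g t| ≤ C) : Integrable fun t => equalRevenue u t * g t := by
  have hC0 : Integrable ((Icc 1 u).indicator fun _ : ℝ => C) :=
    (integrable_indicator_iff measurableSet_Icc).2 (integrableOn_const (by simp))
  refine hC0.mono' ((measurable_equalRevenue u).mul hg).aestronglyMeasurable
    (ae_of_all _ fun t => ?_)
  by_cases ht : t ∈ Icc 1 u
  · rw [indicator_of_mem ht, Real.norm_eq_abs, abs_mul, abs_of_nonneg (equalRevenue_nonneg u t)]
    calc equalRevenue u t * |g t| ≤ 1 * |g t| := by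
          gcongr; exact equalRevenue_le_one u t
      _ ≤ C := by simpa using hC t ht
  · rw [indicator_of_notMem ht, equalRevenue_eq_indicator, indicator_of_notMem ht]; simp

lemma integral_Ici_equalRevenue (u r : ℝ) (h : max r 1 ≤ u) :
    ∫ t in Ici r, equalRevenue u t = (max r 1)⁻¹ - u⁻¹ := by
  rw [equalRevenue_eq_indicator, setIntegral_indicator measurableSet_Icc]
  have hset : Ici r ∩ Icc 1 u = Icc (max r 1) u := by
    ext t; simp [and_assoc]
  rw [hset, integral_Icc_eq_integral_Ioc, ← intervalIntegral.integral_of_le h]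
  have hpos : ∀ t ∈ uIcc (max r 1) u, t ≠ 0 := by
    intro t ht
    rw [uIcc_of_le h] at ht
    have := (le_max_right r 1).trans ht.1
    positivity
  rw [intervalIntegral.integral_eq_sub_of_hasDerivAt (f := fun t => -t⁻¹)]
  · ring
  · intro t ht
    simpa [Pi.neg_def] using (hasDerivAt_inv (hpos t ht)).neg
  · refine ContinuousOn.intervalIntegrable fun t ht => ?_
    have := hpos t ht
    exact ContinuousAt.continuousWithinAt (by fun_prop (disch := positivity))

lemma integral_Ici_equalRevenue_of_lt (u r : ℝ) (h : u < r) :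
    ∫ t in Ici r, equalRevenue u t = 0 := by
  refine setIntegral_eq_zero_of_forall_eq_zero fun t ht => ?_
  rw [equalRevenue, if_neg]
  rintro ⟨-, h2⟩
  exact absurd (h.trans_le ht) (not_lt.2 h2)

lemma mul_integral_Ici_equalRevenue_le_one (u r : ℝ) (hu : 1 ≤ u) (hr : 0 ≤ r) :
    r * ∫ t in Ici r, equalRevenue u t ≤ 1 := by
  rcases lt_or_ge u r with h | h
  · rw [integral_Ici_equalRevenue_of_lt u r h]; simp
  · rw [integral_Ici_equalRevenue u r (max_le h hu)]
    have h1 : 0 < max r 1 := lt_max_of_lt_right one_pos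
    have h2 : r * (max r 1)⁻¹ ≤ 1 := by
      rw [← div_eq_mul_inv, div_le_one h1]; exact le_max_left _ _
    have h3 : 0 ≤ r * u⁻¹ := by positivity
    linarith

lemma monotoneOn_equalRevenue_virtualValue (w u : ℝ) (hw : 0 < w) :
    MonotoneOn (fun t => t - (∫ t' in Ici t, w * equalRevenue u t') / (w * equalRevenue u t))
      (Icc 1 u) := by
  have key : EqOn (fun t => t ^ 2 * u⁻¹)
      (fun t => t - (∫ t' in Ici t, w * equalRevenue u t') / (w * equalRevenue u t))
      (Icc 1 u) := by
    intro t ht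
    have ht0 : 0 < t := one_pos.trans_le ht.1
    have hu0 : 0 < u := ht0.trans_le ht.2
    simp only [integral_const_mul]
    rw [integral_Ici_equalRevenue u t (max_le ht.2 (ht.1.trans ht.2)), max_eq_left ht.1,
      equalRevenue_eq_indicator, indicator_of_mem ht]
    field_simp
    ring
  refine MonotoneOn.congr (fun a ha b hb hab => ?_) key
  have ha0 : 0 < a := one_pos.trans_le ha.1
  have hu0 : 0 < u := ha0.trans_le ha.2
  gcongr

lemma one_lt_signalCap {c : ℕ} (hc : 0 < c) (k : ℕ) : 1 < signalCap c k :=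
  one_lt_pow₀ one_lt_two (by omega)

lemma dyadicLevel_le_iff (t : ℝ) (k : ℕ) : dyadicLevel t ≤ k ↔ t ≤ 2 ^ (k + 1) := by
  rw [dyadicLevel, Nat.sub_le_iff_le_add, Nat.clog_le_iff_le_pow one_lt_two, Nat.ceil_le]
  norm_cast

lemma two_pow_dyadicLevel_le {t : ℝ} (ht : 1 ≤ t) : 2 ^ dyadicLevel t ≤ t := by
  rcases h : dyadicLevel t with _ | j
  · simpa using ht
  · have := (dyadicLevel_le_iff t j).not.1 (by omega)
    exact (not_le.1 this).le

lemma le_two_mul_two_pow_dyadicLevel (t : ℝ) : t ≤ 2 * 2 ^ dyadicLevel t := by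
  have := (dyadicLevel_le_iff t _).1 le_rfl
  rwa [pow_succ'] at this

lemma dyadicLevel_lt {c : ℕ} (hc : 0 < c) {t : ℝ} (ht : t ≤ 2 ^ c) : dyadicLevel t < c := by
  have := (dyadicLevel_le_iff t (c - 1)).2 (by rwa [Nat.sub_add_cancel hc])
  omega

lemma le_signalCap_iff {c : ℕ} {t : ℝ} (ht : t ≤ 2 ^ c) (k : ℕ) :
    t ≤ signalCap c k ↔ dyadicLevel t ≤ k := by
  rw [dyadicLevel_le_iff, signalCap]
  rcases le_total (k + 1) c with h | h
  · rw [min_eq_left h]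
  · rw [min_eq_right h]
    exact ⟨fun _ => ht.trans (pow_le_pow_right₀ one_le_two h), fun _ => ht⟩

lemma equalRevenue_signalCap {c : ℕ} {t : ℝ} (ht : 1 ≤ t ∧ t ≤ 2 ^ c) (k : ℕ) :
    equalRevenue (signalCap c k) t = if dyadicLevel t ≤ k then (t ^ 2)⁻¹ else 0 := by
  simp only [equalRevenue, le_signalCap_iff ht.2, ht.1, true_and]

lemma equalRevenue_signalCap_of_not {c : ℕ} {t : ℝ} (ht : ¬(1 ≤ t ∧ t ≤ 2 ^ c)) (k : ℕ) :
    equalRevenue (signalCap c k) t = 0 := by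
  rw [equalRevenue, if_neg]
  rintro ⟨h1, h2⟩
  exact ht ⟨h1, h2.trans (pow_le_pow_right₀ one_le_two (min_le_right _ _))⟩

lemma measurable_dyadicLevel : Measurable dyadicLevel :=
  (measurable_from_top (f := fun n : ℕ => Nat.clog 2 n - 1)).comp Nat.measurable_ceil

lemma measurable_levelAlloc (c k : ℕ) : Measurable fun t => levelAlloc c t k := by
  have hj := measurable_dyadicLevel
  refine Measurable.ite (measurableSet_Icc.inter ?_) measurable_const measurable_const
  exact (measurableSet_le hj measurable_const).inter
    (measurableSet_lt measurable_const (hj.add_const c))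

lemma measurable_two_pow_dyadicLevel : Measurable fun t => (2 : ℝ) ^ dyadicLevel t :=
  (measurable_from_top (f := fun n : ℕ => (2 : ℝ) ^ n)).comp measurable_dyadicLevel

lemma measurable_levelPayment (c K k : ℕ) : Measurable fun t => levelPayment c K t k := by
  refine ((measurable_levelAlloc c k).mul measurable_two_pow_dyadicLevel).sub ?_
  refine Measurable.ite (measurableSet_Icc.inter ?_)
    (measurable_two_pow_dyadicLevel.const_mul _) measurable_const
  exact measurableSet_eq_fun measurable_const measurable_dyadicLevel

lemma measurable_uncurry_of_fin {n : ℕ} {g : ℝ → ℕ → ℝ} (hg : ∀ k, Measurable fun t => g t k) :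
    Measurable fun q : ℝ × Fin n => g q.1 q.2 :=
  measurable_from_prod_countable_left fun k => hg k

lemma levelAlloc_mem (c : ℕ) (t : ℝ) (k : ℕ) : levelAlloc c t k ∈ Icc (0 : ℝ) 1 := by
  unfold levelAlloc; split_ifs <;> simp

lemma levelBonus_nonneg {c K : ℕ} (h : K ≤ c) (t : ℝ) (k : ℕ) : 0 ≤ levelBonus c K t k := by
  have : (0 : ℝ) ≤ c - K := sub_nonneg.2 (by exact_mod_cast h)
  unfold levelBonus; split_ifs <;> positivity

lemma levelPayment_le {c K : ℕ} (h : K ≤ c) (t : ℝ) (k : ℕ) :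
    0 ≤ t * levelAlloc c t k - levelPayment c K t k := by
  have hb := levelBonus_nonneg h t k
  have ha : 0 ≤ levelAlloc c t k * (t - 2 ^ dyadicLevel t) := by
    unfold levelAlloc
    split_ifs with hk
    · linarith [two_pow_dyadicLevel_le hk.1.1]
    · simp
  unfold levelPayment
  linarith

/-- The utility of value `t` from a report, summed over the signals `k ≥ j`. -/
lemma sum_reported_utility {c K : ℕ} {t t' : ℝ} (ht' : 1 ≤ t' ∧ t' ≤ 2 ^ c) (j : ℕ)
    (hi : dyadicLevel t' < c) :
    ∑ k ∈ Finset.range (2 * c), (if j ≤ k then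
        t * levelAlloc c t' k - levelPayment c K t' k else 0) =
      ((dyadicLevel t' + c - max (dyadicLevel t') j : ℕ) : ℝ) * (t - 2 ^ dyadicLevel t') +
        if j ≤ dyadicLevel t' then ((c : ℝ) - K) * 2 ^ dyadicLevel t' else 0 := by
  set i := dyadicLevel t' with hidef
  have hterm : ∀ k ∈ Finset.range (2 * c), (if j ≤ k then
      t * levelAlloc c t' k - levelPayment c K t' k else 0) =
      (if k ∈ Finset.Ico (max i j) (i + c) then t - 2 ^ i else 0) +
        if k = i then (if j ≤ i then ((c : ℝ) - K) * 2 ^ i else 0) else 0 := by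
    intro k _
    simp only [levelPayment, levelAlloc, levelBonus, ← hidef, ht', true_and, and_self,
      Finset.mem_Ico, max_le_iff]
    by_cases h1 : j ≤ k <;> by_cases h2 : i ≤ k <;> by_cases h3 : k < i + c <;>
      by_cases h4 : k = i <;> simp [h1, h2, h3, h4] <;> grind
  rw [Finset.sum_congr rfl hterm, Finset.sum_add_distrib, Finset.sum_ite_eq',
    if_pos (by simp; omega), ← Finset.sum_filter]
  have : (Finset.range (2 * c)).filter (· ∈ Finset.Ico (max i j) (i + c)) =
      Finset.Ico (max i j) (i + c) := by
    ext k; simp only [Finset.mem_filter, Finset.mem_range, Finset.mem_Ico]; omega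
  rw [this, Finset.sum_const, Nat.card_Ico, nsmul_eq_mul]

lemma sum_truthful_utility {c K : ℕ} (hc : 0 < c) {t : ℝ} (ht : 1 ≤ t ∧ t ≤ 2 ^ c) :
    ∑ k ∈ Finset.range (2 * c), (if dyadicLevel t ≤ k then
        t * levelAlloc c t k - levelPayment c K t k else 0) =
      c * t - K * 2 ^ dyadicLevel t := by
  rw [sum_reported_utility ht _ (dyadicLevel_lt hc ht.2)]
  simp
  ring

lemma sum_reported_utility_le {c K : ℕ} (hK : 0 < K) (hc : c = K * (1 + 2 ^ K)) {t : ℝ}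
    (ht : 1 ≤ t ∧ t ≤ 2 ^ c) (t' : ℝ) :
    ∑ k ∈ Finset.range (2 * c), (if dyadicLevel t ≤ k then
        t * levelAlloc c t' k - levelPayment c K t' k else 0) ≤
      c * t - K * 2 ^ dyadicLevel t := by
  have hc0 : 0 < c := by rw [hc]; positivity
  have hKc : K ≤ c := by rw [hc]; exact Nat.le_mul_of_pos_right _ (by positivity)
  have hKc' : (K : ℝ) ≤ c := by exact_mod_cast hKc
  have hjt := two_pow_dyadicLevel_le ht.1
  have hjc := dyadicLevel_lt hc0 ht.2
  by_cases ht' : 1 ≤ t' ∧ t' ≤ 2 ^ c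
  · have hic := dyadicLevel_lt hc0 ht'.2
    rw [sum_reported_utility ht' _ hic]
    set i := dyadicLevel t'
    set j := dyadicLevel t
    rcases le_or_gt j i with hji | hij
    · rw [if_pos hji, max_eq_left hji, Nat.add_sub_cancel_left]
      have : (K : ℝ) * 2 ^ j ≤ K * 2 ^ i := by gcongr; norm_num
      linarith
    · obtain ⟨d, hd⟩ := Nat.exists_eq_add_of_lt hij
      rw [if_neg hij.not_ge, max_eq_right hij.le]
      have hcast : ((i + c - j : ℕ) : ℝ) = c - (d + 1 : ℕ) := by
        rw [eq_sub_iff_add_eq]; norm_cast; omega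
      rw [hcast]
      have hdc : ((d + 1 : ℕ) : ℝ) ≤ c := by norm_cast; omega
      have hj2 : (2 : ℝ) ^ j = 2 ^ i * 2 ^ (d + 1) := by rw [← pow_add, hd]; ring
      suffices h : (K : ℝ) * 2 ^ j ≤ (d + 1 : ℕ) * t + (c - (d + 1 : ℕ)) * 2 ^ i by linarith
      rcases le_or_gt K (d + 1) with hKd | hdK
      · have h1 : (K : ℝ) * 2 ^ j ≤ (d + 1 : ℕ) * t := by gcongr
        have h2 : 0 ≤ ((c : ℝ) - (d + 1 : ℕ)) * 2 ^ i :=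
          mul_nonneg (sub_nonneg.2 hdc) (by positivity)
        linarith
      · have h1 : (0 : ℝ) ≤ (d + 1 : ℕ) * t := mul_nonneg (by positivity) (by linarith)
        have h2 : (K : ℝ) * 2 ^ (d + 1) ≤ c - (d + 1 : ℕ) := by
          have h3 : (K : ℝ) * 2 ^ (d + 1) ≤ K * 2 ^ K := by gcongr; norm_num
          have h4 : ((d + 1 : ℕ) : ℝ) ≤ K := by exact_mod_cast hdK.le
          have h5 : (c : ℝ) = K * (1 + 2 ^ K) := by exact_mod_cast hc
          linarith
        have h3 : (K : ℝ) * 2 ^ (d + 1) * 2 ^ i ≤ (c - (d + 1 : ℕ)) * 2 ^ i := by gcongr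
        rw [hj2]
        linarith
  · have hzero : ∀ k ∈ Finset.range (2 * c), (if dyadicLevel t ≤ k then
        t * levelAlloc c t' k - levelPayment c K t' k else 0) = 0 := by
      intro k _
      simp [levelPayment, levelAlloc, levelBonus, ht']
    rw [Finset.sum_eq_zero hzero]
    have h1 : (K : ℝ) * 2 ^ dyadicLevel t ≤ c * t := by gcongr
    linarith

lemma sum_equalRevenue_mul {c : ℕ} {t : ℝ} (ht : 1 ≤ t ∧ t ≤ 2 ^ c) (w : ℝ) (h : ℕ → ℝ) :
    ∑ k : Fin (2 * c), w * equalRevenue (signalCap c k) t * h k =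
      w * (t ^ 2)⁻¹ * ∑ k ∈ Finset.range (2 * c), if dyadicLevel t ≤ k then h k else 0 := by
  rw [Fin.sum_univ_eq_sum_range (fun k => w * equalRevenue (signalCap c k) t * h k),
    Finset.mul_sum]
  refine Finset.sum_congr rfl fun k _ => ?_
  rw [equalRevenue_signalCap ht]
  split_ifs <;> simp

lemma sum_payment {c K : ℕ} (hc : 0 < c) {t : ℝ} (ht : 1 ≤ t ∧ t ≤ 2 ^ c) :
    ∑ k ∈ Finset.range (2 * c), (if dyadicLevel t ≤ k then levelPayment c K t k else 0) =
      K * 2 ^ dyadicLevel t := by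
  have h := sum_reported_utility (K := K) (t := 0) ht (dyadicLevel t) (dyadicLevel_lt hc ht.2)
  simp only [zero_mul, zero_sub, max_self, Nat.add_sub_cancel_left, le_refl, if_true] at h
  rw [← neg_inj, ← Finset.sum_neg_distrib]
  calc _ = _ := Finset.sum_congr rfl fun k _ => by split_ifs <;> simp
    _ = _ := h
    _ = _ := by ring

lemma abs_levelPayment_le {c K : ℕ} (hKc : K ≤ c) {t : ℝ} (ht : t ∈ Icc 1 (2 ^ c)) (k : ℕ) :
    |levelPayment c K t k| ≤ 2 ^ c + (c - K) * 2 ^ c := by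
  have hj : (2 : ℝ) ^ dyadicLevel t ≤ 2 ^ c := (two_pow_dyadicLevel_le ht.1).trans ht.2
  have hK : (0 : ℝ) ≤ c - K := sub_nonneg.2 (by exact_mod_cast hKc)
  have ha := levelAlloc_mem c t k
  have hb := levelBonus_nonneg hKc t k
  have h1 : levelAlloc c t k * 2 ^ dyadicLevel t ≤ 1 * 2 ^ c := by
    gcongr
    exact ha.2
  have h0 : 0 ≤ levelAlloc c t k * 2 ^ dyadicLevel t := mul_nonneg ha.1 (by positivity)
  have h2 : levelBonus c K t k ≤ (c - K) * 2 ^ c := by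
    unfold levelBonus
    split_ifs
    · gcongr
    · positivity
  rw [levelPayment, abs_le]
  constructor <;> linarith

lemma revenue_lower_bound {c K : ℕ} (hc : 0 < c) (hKc : K ≤ c) {w : ℝ} (hw : 0 < w) :
    w * K * (c * Real.log 2) / 2 ≤ ∑ k : Fin (2 * c), ∫ t in Ici (0 : ℝ),
      w * equalRevenue (signalCap c k) t * levelPayment c K t k := by
  have hpay : ∀ k : ℕ, Integrable fun t =>
      w * equalRevenue (signalCap c k) t * levelPayment c K t k := by
    intro k
    simp only [mul_assoc]
    refine (integrable_equalRevenue_mul _ (measurable_levelPayment c K k) fun t ht =>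
      abs_levelPayment_le hKc ⟨ht.1, ht.2.trans ?_⟩ k).const_mul w
    exact pow_le_pow_right₀ one_le_two (min_le_right _ _)
  rw [← integral_finsetSum _ fun (k : Fin (2 * c)) _ => (hpay k).integrableOn]
  have hlog : ∫ t in Icc (1 : ℝ) (2 ^ c), w * K / 2 * t⁻¹ = w * K * (c * Real.log 2) / 2 := by
    rw [integral_const_mul, integral_Icc_eq_integral_Ioc,
      ← intervalIntegral.integral_of_le (one_le_pow₀ one_le_two),
      integral_inv_of_pos one_pos (by positivity), div_one, Real.log_pow]
    ring
  have hinv : IntegrableOn (fun t : ℝ => w * K / 2 * t⁻¹) (Icc 1 (2 ^ c)) := by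
    refine ContinuousOn.integrableOn_Icc fun t ht => ?_
    have : t ≠ 0 := (one_pos.trans_le ht.1).ne'
    exact ContinuousAt.continuousWithinAt (by fun_prop (disch := assumption))
  have hsum : Integrable fun t => ∑ k : Fin (2 * c),
      w * equalRevenue (signalCap c k) t * levelPayment c K t k :=
    integrable_finsetSum _ fun k _ => hpay k
  rw [← hlog, setIntegral_eq_of_subset_of_forall_sdiff_eq_zero (s := Icc 1 (2 ^ c))
    (t := Ici 0) measurableSet_Ici (fun t ht => zero_le_one.trans ht.1)]
  · refine setIntegral_mono_on hinv hsum.integrableOn measurableSet_Icc fun t ht => ?_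
    have ht0 : 0 < t := one_pos.trans_le ht.1
    rw [sum_equalRevenue_mul ht w (levelPayment c K t), sum_payment hc ht]
    have h := le_two_mul_two_pow_dyadicLevel t
    calc w * K / 2 * t⁻¹ = w * (t ^ 2)⁻¹ * (K * (t / 2)) := by field_simp
      _ ≤ w * (t ^ 2)⁻¹ * (K * 2 ^ dyadicLevel t) := by gcongr; linarith
  · intro t ht
    refine Finset.sum_eq_zero fun k _ => ?_
    rw [equalRevenue_signalCap_of_not (fun h => ht.2 h)]
    simp

/-- The total mass of the unnormalized equal-revenue densities. -/
noncomputable def totalMass (c : ℕ) : ℝ := ∑ k : Fin (2 * c), (1 - (signalCap c k)⁻¹)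

lemma totalMass_pos {c : ℕ} (hc : 0 < c) : 0 < totalMass c := by
  have : NeZero (2 * c) := ⟨by omega⟩
  exact Finset.sum_pos (fun k _ => sub_pos.2 (inv_lt_one_of_one_lt₀ (one_lt_signalCap hc k)))
    Finset.univ_nonempty

/-- Signal `k < 2 * c` comes with the equal-revenue distribution truncated at `signalCap c k`. -/
noncomputable def equalRevenueInstance (c : ℕ) (hc : 0 < c) : SignalInstance where
  S := Fin (2 * c)
  μ := Measure.count
  sigmaFinite := inferInstance
  f t k := (totalMass c)⁻¹ * equalRevenue (signalCap c k) t
  f_meas := measurable_uncurry_of_fin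
    (g := fun t k => (totalMass c)⁻¹ * equalRevenue (signalCap c k) t)
    fun k => (measurable_equalRevenue _).const_mul _
  f_nonneg t k := mul_nonneg (inv_nonneg.2 (totalMass_pos hc).le) (equalRevenue_nonneg _ _)
  f_zero t k ht := by
    rw [equalRevenue, if_neg (fun h => by linarith [h.1]), mul_zero]
  f_prob := by
    simp only [integral_const_mul, integral_count]
    have : ∑ k : Fin (2 * c), ∫ t in Ici (0 : ℝ), equalRevenue (signalCap c k) t =
        totalMass c := by
      refine Finset.sum_congr rfl fun k _ => ?_
      have h := (one_lt_signalCap hc k).le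
      rw [integral_Ici_equalRevenue _ _ (by simpa using h)]
      simp
    rw [this, inv_mul_cancel₀ (totalMass_pos hc).ne']

lemma integral_equalRevenueInstance (c : ℕ) (hc : 0 < c)
    (g : (equalRevenueInstance c hc).S → ℝ) :
    ∫ s, g s ∂(equalRevenueInstance c hc).μ = ∑ k : Fin (2 * c), g k :=
  integral_count (X := Fin (2 * c)) g

lemma DRev_equalRevenueInstance_le (c : ℕ) (hc : 0 < c) :
    (equalRevenueInstance c hc).DRev ≤ (totalMass c)⁻¹ * (2 * c) := by
  have hw := inv_pos.2 (totalMass_pos hc)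
  rw [SignalInstance.DRev, integral_equalRevenueInstance]
  simp only [equalRevenueInstance, integral_const_mul]
  calc _ ≤ ∑ _k : Fin (2 * c), (totalMass c)⁻¹ := by
        refine Finset.sum_le_sum fun k _ => Real.sSup_le ?_ hw.le
        rintro y ⟨r, hr, rfl⟩
        have h := mul_integral_Ici_equalRevenue_le_one _ r (one_lt_signalCap hc k).le hr
        rw [mul_left_comm]
        exact mul_le_of_le_one_right hw.le h
    _ = _ := by simp; ring

/-- **Unbounded gap with negative payments.**  For every `M > 0` there exists a
single-buyer pricing instance with signals whose conditional value distribution given each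
signal is regular, together with an ex post IR, BIC mechanism — which makes negative
payments, i.e. sometimes pays the buyer — whose expected revenue is at least `M` times the
optimal revenue under public signals of that instance. -/
theorem exists_regular_instance_private_revenue_ge_mul_public (M : ℝ) (hM : 0 < M) :
    ∃ (I : SignalInstance) (x p : ℝ → I.S → ℝ),
      -- the conditional value distribution given each signal is regular
      (∀ s : I.S, ∃ l u : ℝ, l ≤ u ∧
        Function.support (fun t => I.f t s) = Icc l u ∧
        MonotoneOn (fun t => t - (∫ t' in Ici t, I.f t' s) / I.f t s) (Icc l u)) ∧
      Measurable (fun q : ℝ × I.S => x q.1 q.2) ∧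
      Measurable (fun q : ℝ × I.S => p q.1 q.2) ∧
      (∀ t s, 0 ≤ t → x t s ∈ Icc (0:ℝ) 1) ∧
      -- ex post individual rationality
      (∀ t s, 0 ≤ t → 0 ≤ t * x t s - p t s) ∧
      -- Bayesian incentive compatibility
      (∀ t t' : ℝ, 0 ≤ t → 0 ≤ t' →
        ∫ s, I.f t s * (t * x t' s - p t' s) ∂I.μ ≤
          ∫ s, I.f t s * (t * x t s - p t s) ∂I.μ) ∧
      -- the mechanism makes negative payments (sometimes pays the buyer)
      (∃ t s, 0 ≤ t ∧ p t s < 0) ∧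
      M * I.DRev ≤ I.Rev p := by
  obtain ⟨K, hK⟩ := exists_nat_ge (max 1 (8 * M))
  have hK1 : 0 < K := by exact_mod_cast one_pos.trans_le ((le_max_left _ _).trans hK)
  have hKM : 8 * M ≤ K := (le_max_right _ _).trans hK
  obtain ⟨c, hc⟩ : ∃ c, c = K * (1 + 2 ^ K) := ⟨_, rfl⟩
  have hc0 : 0 < c := by rw [hc]; positivity
  have hKc : K ≤ c := by rw [hc]; exact Nat.le_mul_of_pos_right _ (by positivity)
  have hw := inv_pos.2 (totalMass_pos hc0)
  refine ⟨equalRevenueInstance c hc0, fun t k => levelAlloc c t k.val,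
    fun t k => levelPayment c K t k.val, fun k => ⟨1, signalCap c k.val, ?_, ?_, ?_⟩,
    measurable_uncurry_of_fin (measurable_levelAlloc c),
    measurable_uncurry_of_fin (measurable_levelPayment c K),
    fun t k _ => levelAlloc_mem c t k.val, fun t k _ => levelPayment_le hKc t k.val,
    fun t t' _ _ => ?_, ⟨1, ⟨0, by omega⟩, zero_le_one, ?_⟩, ?_⟩
  · exact (one_lt_signalCap hc0 _).le
  · ext t
    rw [Function.mem_support, mem_Icc]
    refine (mul_ne_zero_iff_left hw.ne').trans ?_
    rw [equalRevenue]
    split_ifs with h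
    · have : t ≠ 0 := by linarith [h.1]
      simp [this, h]
    · simpa using h
  · exact monotoneOn_equalRevenue_virtualValue _ _ hw
  · rw [integral_equalRevenueInstance, integral_equalRevenueInstance]
    simp only [equalRevenueInstance]
    by_cases ht : 1 ≤ t ∧ t ≤ 2 ^ c
    · rw [sum_equalRevenue_mul ht _ fun k => t * levelAlloc c t' k - levelPayment c K t' k,
        sum_equalRevenue_mul ht _ fun k => t * levelAlloc c t k - levelPayment c K t k,
        sum_truthful_utility hc0 ht]
      gcongr
      exact sum_reported_utility_le hK1 hc ht t'
    · simp [equalRevenue_signalCap_of_not ht]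
  · have hlevel : dyadicLevel 1 = 0 := by simp [dyadicLevel]
    have hbig : (K : ℝ) + 2 ≤ c := by
      have h2 : 2 ≤ 2 ^ K := Nat.le_self_pow hK1.ne' 2
      have : K + 2 ≤ c := by rw [hc]; nlinarith
      exact_mod_cast this
    have hone : (1 : ℝ) ≤ 2 ^ c := one_le_pow₀ one_le_two
    simp only [levelPayment, levelAlloc, levelBonus, hlevel]
    simp [hone, hc0]
    linarith
  · have hrev := revenue_lower_bound hc0 hKc hw
    have hdrev := DRev_equalRevenueInstance_le c hc0
    rw [SignalInstance.Rev, integral_equalRevenueInstance]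
    refine le_trans ?_ hrev
    calc M * (equalRevenueInstance c hc0).DRev ≤ M * ((totalMass c)⁻¹ * (2 * c)) := by gcongr
      _ = (totalMass c)⁻¹ * (8 * M) * (c * (1 / 2)) / 2 := by ring
      _ ≤ (totalMass c)⁻¹ * K * (c * Real.log 2) / 2 := by
        gcongr
        linarith [Real.log_two_gt_d9]
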